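/- arXiv:1703.02996 — 2 statements merged into one kernel-verified Lean document; each statement's English description precedes it below -/
import Mathlib

section
/- Let p be a prime number and let G be a finite p-group acting by additive automorphisms on a nontrivial finite abelian group M of exponent p (i.e., p • m = 0 for every m ∈ M). Then the group of coinvariants M_G = M/N is nontrivial, where N is the subgroup of M generated by all elements of the form g • m - m with g ∈ G and m ∈ M. -/
/-!
The coinvariants of `M` are nontrivial as soon as some nonzero `f : M →+ ZMod p` is `G`-invariant,
since such an `f` factors through them. As `M ≠ pM`, the `𝔽_p`-vector space `M / pM` supplies a
nonzero `f`. When `G` acts through a finite quotient, the translates of `f` span a finite group of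
`p`-power order, on which the `p`-group `G` must fix more than just `0`: its orbits have `p`-power
size, so the number of fixed points is divisible by `p`.
-/

open MulAction

section FixedPoints

variable {p : ℕ} {G A : Type*} [AddCommGroup A]

theorem finite_closure_of_nsmul_eq_zero {n : ℕ} {s : Set A} (hn : 0 < n) (hs : s.Finite)
    (hns : ∀ a ∈ s, n • a = 0) : Finite (AddSubgroup.closure s) := by
  have : AddGroup.FG (AddSubgroup.closure s) :=
    (AddGroup.fg_iff_addSubgroup_fg _).2 ⟨hs.toFinset, by rw [hs.coe_toFinset]⟩
  have closure_le_ker : AddSubgroup.closure s ≤ (nsmulAddMonoidHom (α := A) n).ker :=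
    (AddSubgroup.closure_le _).2 hns
  refine AddCommGroup.finite_of_fg_isAddTorsion _ fun a ↦ ?_
  exact isOfFinAddOrder_iff_nsmul_eq_zero.2 ⟨n, hn, Subtype.ext (closure_le_ker a.2)⟩

theorem smul_mem_closure_orbit [Monoid G] [DistribMulAction G A] {a b : A} (g : G)
    (hb : b ∈ AddSubgroup.closure (orbit G a)) : g • b ∈ AddSubgroup.closure (orbit G a) := by
  suffices AddSubgroup.closure (orbit G a) ≤
      (AddSubgroup.closure (orbit G a)).comap (DistribSMul.toAddMonoidHom A g) from this hb
  exact (AddSubgroup.closure_le _).2 fun c hc ↦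
    AddSubgroup.subset_closure (mem_orbit_of_mem_orbit g hc)

theorem exists_ne_zero_mem_fixedPoints_of_finite_orbit [Group G] [DistribMulAction G A]
    [Fact p.Prime] (hG : IsPGroup p G) {a : A} (ha : a ≠ 0) (hpa : p • a = 0)
    (hfin : (orbit G a).Finite) : ∃ b ∈ fixedPoints G A, b ≠ 0 := by
  let S : SubMulAction G A :=
    { carrier := AddSubgroup.closure (orbit G a)
      smul_mem' := fun g _ hb ↦ smul_mem_closure_orbit g hb }
  have : Finite S := by
    refine finite_closure_of_nsmul_eq_zero (Fact.out : p.Prime).pos hfin ?_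
    rintro _ ⟨g, rfl⟩
    exact (smul_comm p g a).trans (by rw [hpa, smul_zero])
  have dvd_card : p ∣ Nat.card S := by
    have := AddSubgroup.addOrderOf_dvd_natCard _
      (AddSubgroup.subset_closure (mem_orbit_self (M := G) a))
    rwa [addOrderOf_eq_prime hpa ha] at this
  have zero_mem_fixedPoints : (⟨0, zero_mem (AddSubgroup.closure _)⟩ : S) ∈ fixedPoints G S :=
    fun g ↦ Subtype.ext (smul_zero g)
  obtain ⟨b, hb, hb0⟩ :=
    hG.exists_fixed_point_of_prime_dvd_card_of_fixed_point S dvd_card zero_mem_fixedPoints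
  exact ⟨b, fun g ↦ congrArg Subtype.val (hb g), fun h ↦ hb0 (Subtype.ext h.symm)⟩

end FixedPoints

section Coinvariants

variable {p : ℕ} {G M A : Type*} [AddCommGroup M] [AddGroup A]

section Monoid

variable [Monoid G] [DistribMulAction G M]

variable (G M) in
/-- The subgroup generated by the elements `g • m - m`; the quotient of `M` by it is the group of
coinvariants `M_G`. -/
def coinvariantRelations : AddSubgroup M :=
  AddSubgroup.closure {x : M | ∃ (g : G) (m : M), x = g • m - m}

theorem coinvariantRelations_le_ker {f : M →+ A} (hf : f ∈ fixedPoints Gᵈᵐᵃ (M →+ A)) :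
    coinvariantRelations G M ≤ f.ker := by
  refine (AddSubgroup.closure_le _).2 ?_
  rintro _ ⟨g, m, rfl⟩
  have map_smul_eq : f (g • m) = f m := DFunLike.congr_fun (hf (DomMulAct.mk g)) m
  simp [AddMonoidHom.mem_ker, map_smul_eq]

theorem nontrivial_coinvariants_of_mem_fixedPoints {f : M →+ A}
    (hf : f ∈ fixedPoints Gᵈᵐᵃ (M →+ A)) (hf0 : f ≠ 0) :
    Nontrivial (M ⧸ coinvariantRelations G M) := by
  refine QuotientAddGroup.nontrivial_iff.2 fun htop ↦ hf0 ?_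
  exact AddMonoidHom.ker_eq_top_iff.1 (top_le_iff.1 (htop ▸ coinvariantRelations_le_ker hf))

end Monoid

variable [Group G] [DistribMulAction G M]

theorem finite_orbit_domMulAct_addMonoidHom [Finite (toPermHom G M).range] (f : M →+ A) :
    (orbit Gᵈᵐᵃ f).Finite := by
  have finite_comp : (Set.range fun σ : (toPermHom G M).range ↦ f ∘ σ.1).Finite :=
    Set.finite_range _
  refine (finite_comp.preimage DFunLike.coe_injective.injOn).subset ?_
  rintro _ ⟨g, rfl⟩
  exact ⟨⟨toPermHom G M (DomMulAct.mk.symm g), _, rfl⟩, rfl⟩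

theorem exists_addMonoidHom_zmod_ne_zero [Fact p.Prime]
    (hM : ¬ Function.Surjective fun m : M ↦ p • m) : ∃ f : M →+ ZMod p, f ≠ 0 := by
  obtain ⟨m, hm⟩ := not_forall.1 hM
  have mkQ_ne_zero : ModN.mkQ p m ≠ 0 := fun h ↦ by
    obtain ⟨n, hn⟩ := (Submodule.Quotient.mk_eq_zero _).1 h
    exact hm ⟨n, by simpa using hn⟩
  obtain ⟨φ, hφ⟩ := Module.Projective.exists_dual_ne_zero (ZMod p) mkQ_ne_zero
  exact ⟨φ.toAddMonoidHom.comp (ModN.mkQ p), fun h ↦ hφ (DFunLike.congr_fun h m)⟩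

theorem coinvariants_nontrivial_general [Fact p.Prime] (hG : IsPGroup p G)
    [Finite (toPermHom G M).range] (hM : ¬ Function.Surjective fun m : M ↦ p • m) :
    Nontrivial (M ⧸ coinvariantRelations G M) := by
  obtain ⟨f, hf⟩ := exists_addMonoidHom_zmod_ne_zero hM
  have nsmul_f : p • f = 0 := by ext; simp
  -- `Gᵈᵐᵃ` is by definition `Gᵐᵒᵖ`.
  have hG' : IsPGroup p Gᵈᵐᵃ := hG.of_equiv (MulEquiv.inv' G)
  obtain ⟨b, hb, hb0⟩ := exists_ne_zero_mem_fixedPoints_of_finite_orbit hG' hf nsmul_f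
    (finite_orbit_domMulAct_addMonoidHom f)
  exact nontrivial_coinvariants_of_mem_fixedPoints hb hb0

end Coinvariants

/-- **Lemma (coinvariants).** Let `p` be a prime and `G` a finite `p`-group acting by
additive automorphisms on a nontrivial finite abelian group `M` of exponent `p`.
Then the group of coinvariants `M_G = M ⧸ N` is nontrivial, where `N` is the subgroup
generated by the elements `g • m - m`. -/
theorem coinvariants_nontrivial
    (p : ℕ) (hp : p.Prime)
    (G : Type) [Group G] [Fintype G] (k : ℕ) (hG : Fintype.card G = p ^ k)
    (M : Type) [AddCommGroup M] [Fintype M] [Nontrivial M]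
    (hexp : ∀ m : M, p • m = 0)
    [DistribMulAction G M] :
    Nontrivial
      (M ⧸ AddSubgroup.closure {x : M | ∃ (g : G) (m : M), x = g • m - m}) := by
  have : Fact p.Prime := ⟨hp⟩
  obtain ⟨m, hm⟩ := exists_ne (0 : M)
  exact coinvariants_nontrivial_general (IsPGroup.of_card (Nat.card_eq_fintype_card.trans hG))
    fun hsurj ↦ hm ((hsurj m).elim fun n hn ↦ hn.symm.trans (hexp n))
end

section
/- Let F be a free group (on an arbitrary generating set), let p be a prime, and let l ≥ 1 be a natural number. Suppose w, z ∈ F are such that w^{p^l} · z^p = u^p for some u ∈ F. Then z commutes with w. Equivalently, if z and w do not commute, then the element w^{p^l} · z^p is not a p-th power in F. -/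
/-!
Suppose `x ^ n * y ^ n = z ^ n` with `n ≥ 2` in a free group. The subgroup generated by `x, y, z`
is free, so assume that it is everything, and suppose its rank is at least two. Free abelian groups
are torsion-free, so `t z = t x * t y` for every homomorphism `t` to a commutative group; hence `t`
is determined by `(t x, t y)`. Counting homomorphisms to the cyclic group `C` of order `n`, every
pair in `C × C` occurs as `(t x, t y)`. Choose `t` with `t x` a generator and `t y = 1`, and `s`
with `s y ≠ 1`. The pair `(s, t)` lifts to a homomorphism to the wreath product `C ≀ C`, in which
`(f, q) ^ n` is the constant function `∏ f` if `q` is a generator and is trivial if `q = 1`. Thus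
the equation reads `s x = s z = s x * s y`, which is absurd. So the rank is at most one and `x`, `y`
commute.
-/

open Finset Function IsFreeGroup Subgroup

section RegularWreathProduct

theorem regularWreathProduct_pow_right {D Q : Type*} [Group D] [Group Q] (w : D ≀ᵣ Q) (n : ℕ) :
    (w ^ n).right = w.right ^ n :=
  map_pow RegularWreathProduct.rightHom w n

variable {D Q : Type*} [CommGroup D] [Group Q]

theorem regularWreathProduct_pow_left_apply (w : D ≀ᵣ Q) (n : ℕ) (q : Q) :
    (w ^ n).left q = ∏ i ∈ range n, w.left ((w.right ^ i)⁻¹ * q) := by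
  induction n with
  | zero => simp
  | succ n ih => simp [pow_succ, prod_range_succ, ih, regularWreathProduct_pow_right]

theorem regularWreathProduct_pow_left_apply_of_right_eq_one {w : D ≀ᵣ Q} (hw : w.right = 1)
    (n : ℕ) (q : Q) : (w ^ n).left q = w.left q ^ n := by
  simp [regularWreathProduct_pow_left_apply, hw]

variable [Fintype Q]

theorem regularWreathProduct_pow_card_left_apply {w : D ≀ᵣ Q}
    (hw : ∀ q, q ∈ zpowers w.right) (q : Q) :
    (w ^ Nat.card Q).left q = ∏ r, w.left r := by
  classical
  have pow_injOn : Set.InjOn (w.right ^ ·) (range (Nat.card Q) : Set ℕ) := by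
    rw [coe_range, ← orderOf_eq_card_of_forall_mem_zpowers hw]
    exact pow_injOn_Iio_orderOf
  calc (w ^ Nat.card Q).left q
      = ∏ i ∈ range (Nat.card Q), w.left ((w.right ^ i)⁻¹ * q) :=
        regularWreathProduct_pow_left_apply w _ q
    _ = ∏ r, w.left (r⁻¹ * q) := by rw [← IsCyclic.image_range_card hw, prod_image pow_injOn]
    _ = ∏ r, w.left r := ((Equiv.inv Q).trans (Equiv.mulRight q)).prod_comp w.left

/-- The quotient map from the wreath product `D ≀ᵣ Q` to `D × Q` that multiplies together the
`Q`-indexed coordinates in `D`. -/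
def regularWreathProductToProd : D ≀ᵣ Q →* D × Q where
  toFun w := (∏ q, w.left q, w.right)
  map_one' := by simp
  map_mul' v w := by
    have prod_shift : ∏ q, w.left (v.right⁻¹ * q) = ∏ q, w.left q :=
      Fintype.prod_equiv (Equiv.mulLeft v.right⁻¹) _ _ fun _ ↦ rfl
    simp [prod_mul_distrib, prod_shift]

theorem regularWreathProductToProd_surjective :
    Surjective (regularWreathProductToProd : D ≀ᵣ Q →* D × Q) := by
  classical
  rintro ⟨d, q⟩
  exact ⟨⟨Pi.mulSingle 1 d, q⟩, by simp [regularWreathProductToProd]⟩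

end RegularWreathProduct

theorem commute_of_commute_pow_left {G : Type*} [Group G] [IsMulTorsionFree G] {x y : G} {n : ℕ}
    (hn : n ≠ 0) (h : Commute (x ^ n) y) : Commute x y := by
  have conj_pow_eq : (y * x * y⁻¹) ^ n = x ^ n := by
    rw [conj_pow, ← h.eq, mul_inv_cancel_right]
  exact (mul_inv_eq_iff_eq_mul.mp (pow_left_injective hn conj_pow_eq)).symm

section FreeGroup

variable {G : Type*} [Group G] [IsFreeGroup G]

theorem isMulTorsionFree_of_isFreeGroup : IsMulTorsionFree G :=
  Injective.isMulTorsionFree (toFreeGroup G).toMonoidHom (toFreeGroup G).injective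

theorem exists_monoidHom_comp_eq_of_surjective {M N : Type*} [Group M] [Group N] {π : M →* N}
    (hπ : Surjective π) (φ : G →* N) : ∃ ψ : G →* M, π.comp ψ = φ :=
  ⟨IsFreeGroup.lift fun i ↦ surjInv hπ (φ (of i)), ext_hom fun i ↦ by simp [surjInv_eq]⟩

theorem commute_of_subsingleton_generators [Subsingleton (Generators G)] (x y : G) :
    Commute x y := by
  have conj_eq_one : (MulAut.conj : G →* MulAut G) = 1 := ext_hom fun i ↦
    MulEquiv.toMonoidHom_injective <| ext_hom fun j ↦ by simp [Subsingleton.elim j i]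
  exact mul_inv_eq_iff_eq_mul.mp (DFunLike.congr_fun (DFunLike.congr_fun conj_eq_one x) y)

variable {x y z : G} {n : ℕ}

theorem map_eq_map_mul_map_of_pow_mul_pow_eq_pow {A : Type*} [CommGroup A] (hn : n ≠ 0)
    (h : x ^ n * y ^ n = z ^ n) (t : G →* A) : t z = t x * t y := by
  let π : Multiplicative (Additive A →₀ ℤ) →* A :=
    (Finsupp.linearCombination ℤ id).toAddMonoidHom.toMultiplicativeLeft
  have π_surjective : Surjective π := Finsupp.linearCombination_id_surjective ℤ (Additive A)
  obtain ⟨T, rfl⟩ := exists_monoidHom_comp_eq_of_surjective π_surjective t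
  have T_eq : T z = T x * T y := pow_left_injective hn <| by
    simpa [mul_pow] using congrArg T h.symm
  simp [T_eq]

theorem map_eq_one_of_pow_mul_pow_eq_pow {D Q : Type*} [CommGroup D] [CommGroup Q] [Finite Q]
    (hD : ∀ d : D, d ^ Nat.card Q = 1) (h : x ^ Nat.card Q * y ^ Nat.card Q = z ^ Nat.card Q)
    (s : G →* D) {t : G →* Q} (htx : ∀ q, q ∈ zpowers (t x)) (hty : t y = 1) : s y = 1 := by
  have := Fintype.ofFinite Q
  obtain ⟨ρ, hρ⟩ := exists_monoidHom_comp_eq_of_surjective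
    regularWreathProductToProd_surjective (s.prod t)
  have prod_left (g : G) : ∏ q, (ρ g).left q = s g := congrArg Prod.fst (DFunLike.congr_fun hρ g)
  have right_eq (g : G) : (ρ g).right = t g := congrArg Prod.snd (DFunLike.congr_fun hρ g)
  have left_x (q : Q) : (ρ x ^ Nat.card Q).left q = s x := by
    rw [regularWreathProduct_pow_card_left_apply (by rwa [right_eq]), prod_left]
  have left_y (q : Q) : (ρ y ^ Nat.card Q).left q = 1 := by
    rw [regularWreathProduct_pow_left_apply_of_right_eq_one (by rw [right_eq, hty]), hD]
  have left_z (q : Q) : (ρ z ^ Nat.card Q).left q = s z := by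
    rw [regularWreathProduct_pow_card_left_apply, prod_left]
    rwa [right_eq, map_eq_map_mul_map_of_pow_mul_pow_eq_pow Nat.card_pos.ne' h, hty, mul_one]
  have s_z : s z = s x := by
    simpa [-Nat.card_eq_fintype_card, left_x, left_y, left_z] using
      congrArg (fun g ↦ (ρ g).left 1) h.symm
  simpa [s_z] using map_eq_map_mul_map_of_pow_mul_pow_eq_pow Nat.card_pos.ne' h s

theorem monoidHom_ext_of_pow_mul_pow_eq_pow {A : Type*} [CommGroup A] (hn : n ≠ 0)
    (h : x ^ n * y ^ n = z ^ n) (hgen : closure {x, y, z} = ⊤) {s t : G →* A}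
    (hx : s x = t x) (hy : s y = t y) : s = t := by
  refine MonoidHom.eq_of_eqOn_dense hgen ?_
  rintro g (rfl | rfl | rfl)
  · exact hx
  · exact hy
  · simp only [map_eq_map_mul_map_of_pow_mul_pow_eq_pow hn h, hx, hy]

theorem exists_monoidHom_map_eq_of_pow_mul_pow_eq_pow [Nontrivial (Generators G)] {Q : Type*}
    [CommGroup Q] [Finite Q] (hn : n ≠ 0) (h : x ^ n * y ^ n = z ^ n)
    (hgen : closure {x, y, z} = ⊤) (a b : Q) : ∃ t : G →* Q, t x = a ∧ t y = b := by
  classical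
  obtain ⟨i, j, hij⟩ := exists_pair_ne (Generators G)
  let hom (c : Q × Q) : G →* Q := IsFreeGroup.lift fun k ↦ if k = i then c.1 else c.2
  have hom_injective : Injective hom := fun c d hcd ↦ by
    have hcd := IsFreeGroup.lift.injective hcd
    exact Prod.ext (by simpa using congrFun hcd i) (by simpa [hij.symm] using congrFun hcd j)
  have eval_injective : Injective fun c ↦ (hom c x, hom c y) := fun c d hcd ↦
    hom_injective <| monoidHom_ext_of_pow_mul_pow_eq_pow hn h hgen
      (congrArg Prod.fst hcd) (congrArg Prod.snd hcd)
  obtain ⟨c, hc⟩ := Finite.surjective_of_injective eval_injective (a, b)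
  exact ⟨hom c, congrArg Prod.fst hc, congrArg Prod.snd hc⟩

theorem subsingleton_generators_of_pow_mul_pow_eq_pow (hn : n ≠ 0) (hn' : n ≠ 1)
    (h : x ^ n * y ^ n = z ^ n) (hgen : closure {x, y, z} = ⊤) :
    Subsingleton (Generators G) := by
  by_contra hG
  have := not_subsingleton_iff_nontrivial.mp hG
  have : NeZero n := ⟨hn⟩
  let C := Multiplicative (ZMod n)
  have card_C : Nat.card C = n := Nat.card_zmod n
  have : Nontrivial C := Finite.one_lt_card_iff_nontrivial.mp (by omega)
  obtain ⟨ω, hω⟩ := IsCyclic.exists_generator (α := C)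
  obtain ⟨c, hc⟩ := exists_ne (1 : C)
  obtain ⟨t, htx, hty⟩ := exists_monoidHom_map_eq_of_pow_mul_pow_eq_pow hn h hgen ω 1
  obtain ⟨s, -, hsy⟩ := exists_monoidHom_map_eq_of_pow_mul_pow_eq_pow hn h hgen 1 c
  rw [← card_C] at h
  exact hc <| hsy ▸
    map_eq_one_of_pow_mul_pow_eq_pow (fun _ ↦ pow_card_eq_one') h s (htx ▸ hω) hty

theorem commute_of_pow_mul_pow_eq_pow (hn : n ≠ 0) (hn' : n ≠ 1) (h : x ^ n * y ^ n = z ^ n) :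
    Commute x y := by
  let H : Subgroup G := closure {x, y, z}
  obtain ⟨X, hX⟩ : ∃ X : H, X = x := ⟨⟨x, subset_closure (by simp)⟩, rfl⟩
  obtain ⟨Y, hY⟩ : ∃ Y : H, Y = y := ⟨⟨y, subset_closure (by simp)⟩, rfl⟩
  obtain ⟨Z, hZ⟩ : ∃ Z : H, Z = z := ⟨⟨z, subset_closure (by simp)⟩, rfl⟩
  have hgen : closure {X, Y, Z} = ⊤ := by
    rw [← closure_closure_coe_preimage (k := {x, y, z})]
    congr 1
    ext g
    simp [← hX, ← hY, ← hZ]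
  have hH : X ^ n * Y ^ n = Z ^ n := Subtype.ext (by simpa [hX, hY, hZ] using h)
  have := subsingleton_generators_of_pow_mul_pow_eq_pow hn hn' hH hgen
  simpa [hX, hY] using (commute_of_subsingleton_generators X Y).map H.subtype

theorem fermat_equality_free_group_general {d k m n : ℕ} (hd : d ≠ 1) (hk : k ≠ 0) (hm : m ≠ 0)
    (hdk : d ∣ k) (hdm : d ∣ m) (hdn : d ∣ n) (h : x ^ k * y ^ m = z ^ n) : Commute x y := by
  have : IsMulTorsionFree G := isMulTorsionFree_of_isFreeGroup
  obtain ⟨k, rfl⟩ := hdk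
  obtain ⟨m, rfl⟩ := hdm
  obtain ⟨n, rfl⟩ := hdn
  have hcomm : Commute (x ^ k) (y ^ m) :=
    commute_of_pow_mul_pow_eq_pow (left_ne_zero_of_mul hk) hd
      (by simpa only [pow_mul'] using h)
  have hcomm' : Commute x (y ^ m) :=
    commute_of_commute_pow_left (right_ne_zero_of_mul hk) hcomm
  exact (commute_of_commute_pow_left (right_ne_zero_of_mul hm) hcomm'.symm).symm

end FreeGroup

/-- **Lyndon–Schützenberger-type theorem in free groups.**  If `w, z, u` are elements of a
free group, `p` is a prime, `l ≥ 1`, and the "Fermat equality" `w^{p^l} · z^p = u^p` holds,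
then `z` commutes with `w`.  Equivalently, if `z` and `w` do not commute, then `w^{p^l} · z^p`
is not a `p`-th power. -/
theorem fermat_equality_free_group
    (α : Type) (p l : ℕ) (hp : p.Prime) (hl : 1 ≤ l)
    (w z u : FreeGroup α) (h : w ^ p ^ l * z ^ p = u ^ p) :
    Commute z w :=
  (fermat_equality_free_group_general hp.ne_one (pow_ne_zero l hp.ne_zero) hp.ne_zero
    (dvd_pow_self p (Nat.one_le_iff_ne_zero.mp hl)) dvd_rfl dvd_rfl h).symm
end
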